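/- Suppose Assumption (Smoothness and boundedness) holds and the loss l is convex. Let μ* ∈ P₂ satisfy ‖E_S[s_{μ*}(θ,x,y)]‖_{L²(μ*)} = 0, and assume there exist α > 0 and γ > 0 such that H_{μ*}(ξ) ≥ (α/2) ‖ξ‖²_{L²(μ*)} whenever ‖ξ‖²_{L^∞(μ*)} ≤ γ. Then ξ = 0 is a local minimum of the function ξ ↦ L_S((id+ξ)_♯ μ*) on L^∞(μ*). -/

import Mathlib

open MeasureTheory
open scoped RealInnerProductSpace

/-- The infinite ensemble `h_μ(x) = E_{θ∼μ}[h(θ,x)]`. -/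
noncomputable def ensemble {d : ℕ} {X : Type*} (h : EuclideanSpace ℝ (Fin d) → X → ℝ)
    (μ : Measure (EuclideanSpace ℝ (Fin d))) (x : X) : ℝ :=
  ∫ θ, h θ x ∂μ

/-- The stochastic gradient `s_μ(θ,x,y) = −l'(−y h_μ(x)) y ∇_θ h(θ,x)`. -/
noncomputable def smu {d : ℕ} {X : Type*} (l : ℝ → ℝ)
    (h : EuclideanSpace ℝ (Fin d) → X → ℝ) (μ : Measure (EuclideanSpace ℝ (Fin d)))
    (θ : EuclideanSpace ℝ (Fin d)) (x : X) (y : ℝ) : EuclideanSpace ℝ (Fin d) :=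
  (-(deriv l (-(y * ensemble h μ x))) * y) • gradient (fun θ' => h θ' x) θ

/-- `E_S[s_μ(θ,x,y)]`, the average of the stochastic gradients over the dataset `S`. -/
noncomputable def gradS {d : ℕ} {X : Type*} (l : ℝ → ℝ)
    (h : EuclideanSpace ℝ (Fin d) → X → ℝ) (N : ℕ) (S : Fin N → X × ℝ)
    (μ : Measure (EuclideanSpace ℝ (Fin d))) (θ : EuclideanSpace ℝ (Fin d)) :
    EuclideanSpace ℝ (Fin d) :=
  (N : ℝ)⁻¹ • ∑ j : Fin N, smu l h μ θ (S j).1 (S j).2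

/-- The empirical risk `L_S(μ) = (1/N) Σ_j l(−y_j h_μ(x_j))`. -/
noncomputable def LS {d : ℕ} {X : Type*} (l : ℝ → ℝ)
    (h : EuclideanSpace ℝ (Fin d) → X → ℝ) (N : ℕ) (S : Fin N → X × ℝ)
    (μ : Measure (EuclideanSpace ℝ (Fin d))) : ℝ :=
  (N : ℝ)⁻¹ * ∑ j : Fin N, l (-((S j).2 * ensemble h μ (S j).1))

/-- The Hessian `∇²_θ h(θ,x)` as a continuous linear map. -/
noncomputable def hess {d : ℕ} {X : Type*} (h : EuclideanSpace ℝ (Fin d) → X → ℝ)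
    (x : X) (θ : EuclideanSpace ℝ (Fin d)) :
    EuclideanSpace ℝ (Fin d) →L[ℝ] EuclideanSpace ℝ (Fin d) :=
  fderiv ℝ (fun θ' => gradient (fun θ'' => h θ'' x) θ') θ

/-- The quadratic form
`H_μ(ξ) = −E_S[y l'(−y h_μ(x)) E_μ[‖ξ(θ)‖²_{∇²_θ h(θ',x)}]]
          + E_S[l''(−y h_μ(x)) (E_μ[∇_θ h(θ,x)ᵀ ξ(θ)])²]`,
where `θ' = θ'(θ,x)` is a given choice of intermediate points. -/
noncomputable def Hmu {d : ℕ} {X : Type*} (l : ℝ → ℝ)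
    (h : EuclideanSpace ℝ (Fin d) → X → ℝ) (N : ℕ) (S : Fin N → X × ℝ)
    (μ : Measure (EuclideanSpace ℝ (Fin d)))
    (ξ : EuclideanSpace ℝ (Fin d) → EuclideanSpace ℝ (Fin d))
    (θ' : EuclideanSpace ℝ (Fin d) → X → EuclideanSpace ℝ (Fin d)) : ℝ :=
  -((N : ℝ)⁻¹ * ∑ j : Fin N, (S j).2 * deriv l (-((S j).2 * ensemble h μ (S j).1)) *
      ∫ θ, ⟪ξ θ, hess h (S j).1 (θ' θ (S j).1) (ξ θ)⟫ ∂μ)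
    + (N : ℝ)⁻¹ * ∑ j : Fin N, deriv (deriv l) (-((S j).2 * ensemble h μ (S j).1)) *
      (∫ θ, ⟪gradient (fun θ'' => h θ'' (S j).1) θ, ξ θ⟫ ∂μ) ^ 2

/-!
Write `G_j(ξ) = E_μ[∇h(θ, x_j)ᵀ ξ(θ)]` and `Q_j(ξ) = E_μ[‖ξ(θ)‖²_{∇²h(θ', x_j)}]`. Integrating
Taylor's formula, displacing `μ` by `ξ` changes `h_μ(x_j)` by exactly `G_j + Q_j / 2`, where
`G_j = O(‖ξ‖)` and `Q_j = O(‖ξ‖²)` in the norm of `L²(μ)`. The second-order expansion of `l` turns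
this into `L_S((id + ξ)_♯ μ) = L_S(μ) + ⟪E_S[s_μ], ξ⟫ + H_μ(ξ) / 2 + o(‖ξ‖²)`: the terms
`G_j Q_j` and `Q_j²` are of higher order, and `y_j² = 1` removes the labels from the quadratic term.
The first-order condition kills the linear term, and the second-order condition gives growth at any
rate `c < α / 4`, even on a ball of `L²(μ)` intersected with `‖ξ‖²_{L^∞} ≤ γ`.
-/

open Asymptotics Filter
open scoped Gradient Topology

section TaylorExpansion

theorem exists_taylor_two_unitInterval {g : ℝ → ℝ} (hg : ContDiff ℝ 2 g) :
    ∃ t ∈ Set.Icc (0 : ℝ) 1, g 1 = g 0 + deriv g 0 + deriv (deriv g) t / 2 := by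
  obtain ⟨t, ht, hgt⟩ := taylor_mean_remainder_lagrange_iteratedDeriv (n := 1)
    (zero_ne_one (α := ℝ)) (hg.contDiffOn.of_le (by norm_num))
  have hderiv : derivWithin g (Set.Icc 0 1) 0 = deriv g 0 :=
    (hg.differentiable two_ne_zero 0).derivWithin (uniqueDiffOn_Icc_zero_one 0 (by simp))
  refine ⟨t, Set.Ioo_subset_Icc_self (by simpa using ht), ?_⟩
  simp only [zero_le_one, Set.uIcc_of_le, taylorWithinEval_succ, taylor_within_zero_eval,
    CharP.cast_eq_zero, zero_add, Nat.factorial_zero, Nat.cast_one, mul_one, inv_one, sub_zero,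
    one_pow, iteratedDerivWithin_one, hderiv, smul_eq_mul, one_mul, Nat.reduceAdd,
    iteratedDeriv_succ, iteratedDeriv_zero, Nat.factorial_two, Nat.cast_ofNat] at hgt
  linarith

theorem taylor_two_isLittleO {l : ℝ → ℝ} (hl : ContDiff ℝ 2 l) (a : ℝ) :
    (fun s => l (a + s) - (l a + deriv l a * s + deriv (deriv l) a / 2 * s ^ 2))
      =o[𝓝 0] fun s => s ^ 2 := by
  have hshift : Tendsto (fun s : ℝ => a + s) (𝓝 0) (𝓝 a) := by
    simpa using (continuous_const_add a).tendsto 0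
  have hpoly (s : ℝ) : taylorWithinEval l 2 Set.univ a (a + s)
      = l a + deriv l a * s + deriv (deriv l) a / 2 * s ^ 2 := by
    simp only [taylorWithinEval_succ, taylor_within_zero_eval, CharP.cast_eq_zero, zero_add,
      Nat.factorial_zero, Nat.cast_one, mul_one, inv_one, add_sub_cancel_left, pow_one, one_mul,
      iteratedDerivWithin_univ, iteratedDeriv_succ, iteratedDeriv_zero, smul_eq_mul,
      Nat.factorial_one, Nat.reduceAdd]
    ring
  simpa only [Function.comp_def, hpoly, add_sub_cancel_left]
    using (taylor_isLittleO_univ (x₀ := a) (n := 2) hl).comp_tendsto hshift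

theorem taylor_two_isLittleO_of_isBigO {ι : Type*} {𝓕 : Filter ι} {l : ℝ → ℝ}
    (hl : ContDiff ℝ 2 l) (a : ℝ) {r u w : ι → ℝ} (hr : Tendsto r 𝓕 (𝓝 0))
    (hu : u =O[𝓕] r) (hw : w =O[𝓕] fun i => r i ^ 2) :
    (fun i => l (a + (u i + w i))
        - (l a + deriv l a * (u i + w i) + deriv (deriv l) a / 2 * u i ^ 2))
      =o[𝓕] fun i => r i ^ 2 := by
  have hr2 : (fun i => r i ^ 2) =o[𝓕] r := by
    simpa only [sq, one_mul] using ((isLittleO_one_iff ℝ).2 hr).mul_isBigO (isBigO_refl r 𝓕)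
  have hwr : w =o[𝓕] r := hw.trans_isLittleO hr2
  have hsum : (fun i => u i + w i) =O[𝓕] r := hu.add hwr.isBigO
  have hremainder := ((taylor_two_isLittleO hl a).comp_tendsto (hsum.trans_tendsto hr)).trans_isBigO
    (hsum.pow 2)
  have hcross : (fun i => deriv (deriv l) a / 2 * (w i * (u i + (u i + w i))))
      =o[𝓕] fun i => r i ^ 2 := by
    simpa only [sq] using (hwr.mul_isBigO (hu.add hsum)).const_mul_left _
  refine (hremainder.add hcross).congr_left fun i => ?_
  simp only [Function.comp_apply]
  ring

end TaylorExpansion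

section TaylorPoint

variable {E : Type*} [NormedAddCommGroup E] [InnerProductSpace ℝ E] [CompleteSpace E] {f : E → ℝ}

/-- `θ'` is an intermediate point for the second-order Taylor formula of `f` at `θ` with
increment `v`. The Hessian is encoded as the derivative of the gradient. -/
def IsTaylorPoint (f : E → ℝ) (θ v θ' : E) : Prop :=
  (∃ t ∈ Set.Icc (0 : ℝ) 1, θ' = θ + t • v) ∧
    f (θ + v) = f θ + ⟪∇ f θ, v⟫ + ⟪v, fderiv ℝ (∇ f) θ' v⟫ / 2

theorem contDiff_one_gradient (hf : ContDiff ℝ 2 f) : ContDiff ℝ 1 (∇ f) :=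
  (InnerProductSpace.toDual ℝ E).symm.contDiff.comp (hf.fderiv_right (by norm_num))

theorem exists_isTaylorPoint (hf : ContDiff ℝ 2 f) (θ v : E) : ∃ θ', IsTaylorPoint f θ v θ' := by
  have hline (t : ℝ) : HasDerivAt (fun t : ℝ => θ + t • v) v t := by
    simpa using ((hasDerivAt_id t).smul_const v).const_add θ
  have hderiv : deriv (fun t : ℝ => f (θ + t • v)) = fun t => ⟪∇ f (θ + t • v), v⟫ := by
    funext t
    rw [inner_gradient_left]
    exact ((hf.differentiable two_ne_zero _).hasFDerivAt.comp_hasDerivAt t (hline t)).deriv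
  have hderiv2 (t : ℝ) : deriv (fun t : ℝ => ⟪∇ f (θ + t • v), v⟫) t
      = ⟪v, fderiv ℝ (∇ f) (θ + t • v) v⟫ := by
    have hgrad :=
      ((contDiff_one_gradient hf).differentiable one_ne_zero _).hasFDerivAt.comp_hasDerivAt
        t (hline t)
    rw [real_inner_comm]
    simpa using (hgrad.inner ℝ (hasDerivAt_const t v)).deriv
  obtain ⟨t, ht, htaylor⟩ := exists_taylor_two_unitInterval (g := fun t : ℝ => f (θ + t • v))
    (by fun_prop)
  refine ⟨θ + t • v, ⟨t, ht, rfl⟩, ?_⟩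
  simpa only [hderiv, hderiv2, one_smul, zero_smul, add_zero] using htaylor

end TaylorPoint

section SquareIntegrable

variable {Ω F : Type*} [MeasurableSpace Ω] [NormedAddCommGroup F] {ν : Measure Ω} {ξ : Ω → F}

theorem integral_norm_sq_le_of_ae_norm_le [IsProbabilityMeasure ν] {r : ℝ}
    (hξ : ∀ᵐ ω ∂ν, ‖ξ ω‖ ≤ r) : ∫ ω, ‖ξ ω‖ ^ 2 ∂ν ≤ r ^ 2 := by
  have hbound : ∀ᵐ ω ∂ν, ‖‖ξ ω‖ ^ 2‖ ≤ r ^ 2 := hξ.mono fun ω hω => by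
    rw [norm_pow, norm_norm]
    gcongr
  simpa using (Real.le_norm_self _).trans (norm_integral_le_of_norm_le_const hbound)

variable [InnerProductSpace ℝ F]

theorem integrable_inner_of_memLp_two {u v : Ω → F} (hu : MemLp u 2 ν) (hv : MemLp v 2 ν) :
    Integrable (fun ω => ⟪u ω, v ω⟫) ν :=
  (L2.integrable_inner (𝕜 := ℝ) (hu.toLp u) (hv.toLp v)).congr <| by
    filter_upwards [hu.coeFn_toLp, hv.coeFn_toLp] with ω huω hvω
    rw [huω, hvω]

theorem Lp_two_norm_sq_eq_integral (ξ : Lp F 2 ν) : ‖ξ‖ ^ 2 = ∫ ω, ‖ξ ω‖ ^ 2 ∂ν := by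
  rw [← real_inner_self_eq_norm_sq, L2.inner_def]
  simp only [real_inner_self_eq_norm_sq]

theorem integral_inner_isBigO_norm {u : Ω → F} (hu : MemLp u 2 ν) :
    (fun ξ : Lp F 2 ν => ∫ ω, ⟪u ω, ξ ω⟫ ∂ν) =O[𝓝 0] fun ξ => ‖ξ‖ := by
  have hinner (ξ : Lp F 2 ν) : ∫ ω, ⟪u ω, ξ ω⟫ ∂ν = ⟪hu.toLp u, ξ⟫ := by
    rw [L2.inner_def]
    refine integral_congr_ae ?_
    filter_upwards [hu.coeFn_toLp] with ω huω
    rw [huω]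
  refine .of_bound ‖hu.toLp u‖ (.of_forall fun ξ => ?_)
  rw [hinner, norm_norm]
  exact norm_inner_le_norm _ _

theorem norm_inner_apply_self_le {A : F →L[ℝ] F} {B : ℝ} (hA : ‖A‖ ≤ B) (v : F) :
    ‖⟪v, A v⟫‖ ≤ B * ‖v‖ ^ 2 :=
  calc ‖⟪v, A v⟫‖ ≤ ‖v‖ * ‖A v‖ := norm_inner_le_norm _ _
    _ ≤ ‖v‖ * (B * ‖v‖) := by gcongr; exact A.le_of_opNorm_le hA v
    _ = B * ‖v‖ ^ 2 := by ring

theorem norm_integral_inner_apply_self_le {A : Ω → F →L[ℝ] F} {B : ℝ} (hA : ∀ ω, ‖A ω‖ ≤ B)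
    (hξ : MemLp ξ 2 ν) : ‖∫ ω, ⟪ξ ω, A ω (ξ ω)⟫ ∂ν‖ ≤ B * ∫ ω, ‖ξ ω‖ ^ 2 ∂ν := by
  rw [← integral_const_mul]
  exact norm_integral_le_of_norm_le (hξ.norm.integrable_sq.const_mul B)
    (.of_forall fun ω => norm_inner_apply_self_le (hA ω) _)

end SquareIntegrable

section IntegratedTaylor

variable {E : Type*} [NormedAddCommGroup E] [InnerProductSpace ℝ E] [CompleteSpace E]
  [MeasurableSpace E] [BorelSpace E] [SecondCountableTopology E]
  {μ : Measure E} {f : E → ℝ} {ξ θ' : E → E} {B : ℝ}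

-- `θ'` need not be measurable: the Taylor formula expresses the integrand without it.
theorem integrable_inner_hessian (hf : ContDiff ℝ 2 f) (hB : ∀ θ, ‖fderiv ℝ (∇ f) θ‖ ≤ B)
    (hξ : MemLp ξ 2 μ) (hθ' : ∀ θ, IsTaylorPoint f θ (ξ θ) (θ' θ)) :
    Integrable (fun θ => ⟪ξ θ, fderiv ℝ (∇ f) (θ' θ) (ξ θ)⟫) μ := by
  have hform : (fun θ => ⟪ξ θ, fderiv ℝ (∇ f) (θ' θ) (ξ θ)⟫)
      = fun θ => 2 * (f (θ + ξ θ) - f θ - ⟪∇ f θ, ξ θ⟫) := by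
    funext θ
    rw [(hθ' θ).2]
    ring
  have hcomp : AEStronglyMeasurable (fun θ => f (θ + ξ θ)) μ :=
    hf.continuous.comp_aestronglyMeasurable (aestronglyMeasurable_id.add hξ.1)
  have hinner : AEStronglyMeasurable (fun θ => ⟪∇ f θ, ξ θ⟫) μ :=
    (contDiff_one_gradient hf).continuous.aestronglyMeasurable.inner hξ.1
  refine (hξ.norm.integrable_sq.const_mul B).mono' ?_
    (.of_forall fun θ => norm_inner_apply_self_le (hB _) _)
  rw [hform]
  exact ((hcomp.sub hf.continuous.aestronglyMeasurable).sub hinner).const_mul 2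

theorem integral_comp_add_eq_taylor (hf : ContDiff ℝ 2 f) (hint : Integrable f μ)
    (hgrad : MemLp (∇ f) 2 μ) (hB : ∀ θ, ‖fderiv ℝ (∇ f) θ‖ ≤ B) (hξ : MemLp ξ 2 μ)
    (hθ' : ∀ θ, IsTaylorPoint f θ (ξ θ) (θ' θ)) :
    ∫ θ, f (θ + ξ θ) ∂μ = ∫ θ, f θ ∂μ + ∫ θ, ⟪∇ f θ, ξ θ⟫ ∂μ
      + (∫ θ, ⟪ξ θ, fderiv ℝ (∇ f) (θ' θ) (ξ θ)⟫ ∂μ) / 2 := by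
  have hlinear := integrable_inner_of_memLp_two hgrad hξ
  have hquadratic := (integrable_inner_hessian hf hB hξ hθ').div_const 2
  calc ∫ θ, f (θ + ξ θ) ∂μ
      = ∫ θ, (f θ + ⟪∇ f θ, ξ θ⟫ + ⟪ξ θ, fderiv ℝ (∇ f) (θ' θ) (ξ θ)⟫ / 2) ∂μ :=
        integral_congr_ae (.of_forall fun θ => (hθ' θ).2)
    _ = _ := by rw [integral_add (by exact hint.add hlinear) hquadratic, integral_add hint hlinear,
        integral_div]

end IntegratedTaylor

section Risk

variable {d N : ℕ} {X : Type*} {l : ℝ → ℝ} {h : EuclideanSpace ℝ (Fin d) → X → ℝ}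
  {S : Fin N → X × ℝ} {μ : Measure (EuclideanSpace ℝ (Fin d))}

theorem integral_inner_gradS (hgrad : ∀ x, MemLp (∇ (h · x)) 2 μ)
    {ξ : EuclideanSpace ℝ (Fin d) → EuclideanSpace ℝ (Fin d)} (hξ : MemLp ξ 2 μ) :
    ∫ θ, ⟪gradS l h N S μ θ, ξ θ⟫ ∂μ = (N : ℝ)⁻¹ * ∑ j,
      -(deriv l (-((S j).2 * ensemble h μ (S j).1))) * (S j).2
        * ∫ θ, ⟪∇ (h · (S j).1) θ, ξ θ⟫ ∂μ := by
  simp only [gradS, smu, real_inner_smul_left, sum_inner]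
  rw [integral_const_mul, integral_finsetSum _ fun j _ =>
    (integrable_inner_of_memLp_two (hgrad _) hξ).const_mul _]
  simp only [integral_const_mul]

theorem gradS_ae_eq_zero (hgrad : ∀ x, MemLp (∇ (h · x)) 2 μ)
    (hfirst : √(∫ θ, ‖gradS l h N S μ θ‖ ^ 2 ∂μ) = 0) : gradS l h N S μ =ᵐ[μ] 0 := by
  have hmem : MemLp (gradS l h N S μ) 2 μ := by
    unfold gradS smu
    exact (memLp_finsetSum Finset.univ fun j _ => (hgrad (S j).1).const_smul
      (-(deriv l (-((S j).2 * ensemble h μ (S j).1))) * (S j).2)).const_smul (N : ℝ)⁻¹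
  rw [Real.sqrt_eq_zero (integral_nonneg fun _ => by positivity),
    integral_eq_zero_iff_of_nonneg (fun _ => by positivity) hmem.norm.integrable_sq] at hfirst
  filter_upwards [hfirst] with θ hθ
  simpa using hθ

theorem ensemble_map_add (hC2 : ∀ x, ContDiff ℝ 2 (h · x))
    (hint : ∀ x, Integrable (h · x) μ) (hgrad : ∀ x, MemLp (∇ (h · x)) 2 μ)
    (hhess : ∀ x, ∃ B, ∀ θ, ‖hess h x θ‖ ≤ B)
    {ξ : EuclideanSpace ℝ (Fin d) → EuclideanSpace ℝ (Fin d)} (hξ : MemLp ξ 2 μ)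
    {θ' : EuclideanSpace ℝ (Fin d) → X → EuclideanSpace ℝ (Fin d)}
    (hθ' : ∀ θ x, IsTaylorPoint (h · x) θ (ξ θ) (θ' θ x)) (x : X) :
    ensemble h (μ.map fun θ => θ + ξ θ) x = ensemble h μ x
      + ∫ θ, ⟪∇ (h · x) θ, ξ θ⟫ ∂μ + (∫ θ, ⟪ξ θ, hess h x (θ' θ x) (ξ θ)⟫ ∂μ) / 2 := by
  obtain ⟨B, hB⟩ := hhess x
  exact (integral_map (aemeasurable_id.add hξ.1.aemeasurable)
    (hC2 x).continuous.aestronglyMeasurable).trans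
      (integral_comp_add_eq_taylor (hC2 x) (hint x) (hgrad x) hB hξ (hθ' · x))

theorem LS_map_add_isLittleO (hl : ContDiff ℝ 2 l) (hC2 : ∀ x, ContDiff ℝ 2 (h · x))
    (hint : ∀ x, Integrable (h · x) μ) (hgrad : ∀ x, MemLp (∇ (h · x)) 2 μ)
    (hhess : ∀ x, ∃ B, ∀ θ, ‖hess h x θ‖ ≤ B) (hy : ∀ j, (S j).2 = 1 ∨ (S j).2 = -1)
    {θ' : Lp (EuclideanSpace ℝ (Fin d)) 2 μ → EuclideanSpace ℝ (Fin d) → X →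
      EuclideanSpace ℝ (Fin d)}
    (hθ' : ∀ ξ θ x, IsTaylorPoint (h · x) θ (ξ θ) (θ' ξ θ x)) :
    (fun ξ : Lp (EuclideanSpace ℝ (Fin d)) 2 μ => LS l h N S (μ.map fun θ => θ + ξ θ)
        - (LS l h N S μ + ∫ θ, ⟪gradS l h N S μ θ, ξ θ⟫ ∂μ + Hmu l h N S μ ξ (θ' ξ) / 2))
      =o[𝓝 0] fun ξ => ‖ξ‖ ^ 2 := by
  let a (j : Fin N) : ℝ := -((S j).2 * ensemble h μ (S j).1)
  let u (j : Fin N) (ξ : Lp (EuclideanSpace ℝ (Fin d)) 2 μ) : ℝ :=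
    -(S j).2 * ∫ θ, ⟪∇ (h · (S j).1) θ, ξ θ⟫ ∂μ
  let w (j : Fin N) (ξ : Lp (EuclideanSpace ℝ (Fin d)) 2 μ) : ℝ :=
    -(S j).2 / 2 * ∫ θ, ⟪ξ θ, hess h (S j).1 (θ' ξ θ (S j).1) (ξ θ)⟫ ∂μ
  have hu (j : Fin N) : u j =O[𝓝 0] fun ξ => ‖ξ‖ :=
    (integral_inner_isBigO_norm (hgrad (S j).1)).const_mul_left _
  have hw (j : Fin N) : w j =O[𝓝 0] fun ξ => ‖ξ‖ ^ 2 := by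
    obtain ⟨B, hB⟩ := hhess (S j).1
    refine IsBigO.const_mul_left (.of_bound B (.of_forall fun ξ => ?_)) _
    rw [norm_pow, norm_norm, Lp_two_norm_sq_eq_integral]
    exact norm_integral_inner_apply_self_le (fun _ => hB _) (Lp.memLp ξ)
  have hsample (j : Fin N) :=
    taylor_two_isLittleO_of_isBigO hl (a j) tendsto_norm_zero (hu j) (hw j)
  refine ((IsLittleO.fun_sum fun j (_ : j ∈ Finset.univ) => hsample j).const_mul_left
    (N : ℝ)⁻¹).congr_left fun ξ => ?_
  have hmargin (j : Fin N) :
      -((S j).2 * ensemble h (μ.map fun θ => θ + ξ θ) (S j).1) = a j + (u j ξ + w j ξ) := by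
    rw [ensemble_map_add hC2 hint hgrad hhess (Lp.memLp ξ) (hθ' ξ)]
    ring
  have hysq (j : Fin N) : (S j).2 ^ 2 = 1 := sq_eq_one_iff.2 (hy j)
  simp only [LS, Hmu, hmargin, integral_inner_gradS hgrad (Lp.memLp ξ), Finset.mul_sum,
    Finset.sum_div, add_div, ← Finset.sum_neg_distrib, ← Finset.sum_add_distrib,
    ← Finset.sum_sub_distrib]
  refine Finset.sum_congr rfl fun j _ => ?_
  simp only [u, w, a, mul_pow, neg_sq, hysq]
  ring

theorem eventually_LS_add_const_mul_norm_sq_le (hl : ContDiff ℝ 2 l)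
    (hC2 : ∀ x, ContDiff ℝ 2 (h · x)) (hint : ∀ x, Integrable (h · x) μ)
    (hgrad : ∀ x, MemLp (∇ (h · x)) 2 μ) (hhess : ∀ x, ∃ B, ∀ θ, ‖hess h x θ‖ ≤ B)
    (hy : ∀ j, (S j).2 = 1 ∨ (S j).2 = -1)
    (hfirst : √(∫ θ, ‖gradS l h N S μ θ‖ ^ 2 ∂μ) = 0) {α γ c : ℝ} (hc : c < α / 4)
    (hsecond : ∀ ξ : EuclideanSpace ℝ (Fin d) → EuclideanSpace ℝ (Fin d),
      Measurable ξ → MemLp ξ 2 μ → (∀ᵐ θ ∂μ, ‖ξ θ‖ ^ 2 ≤ γ) →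
      ∀ θ' : EuclideanSpace ℝ (Fin d) → X → EuclideanSpace ℝ (Fin d),
        (∀ θ x, IsTaylorPoint (h · x) θ (ξ θ) (θ' θ x)) →
        (α / 2) * (∫ θ, ‖ξ θ‖ ^ 2 ∂μ) ≤ Hmu l h N S μ ξ θ') :
    ∀ᶠ ξ : Lp (EuclideanSpace ℝ (Fin d)) 2 μ in 𝓝 0, (∀ᵐ θ ∂μ, ‖ξ θ‖ ^ 2 ≤ γ) →
      LS l h N S μ + c * ‖ξ‖ ^ 2 ≤ LS l h N S (μ.map fun θ => θ + ξ θ) := by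
  choose θ' hθ' using fun (ξ : Lp (EuclideanSpace ℝ (Fin d)) 2 μ) θ x =>
    exists_isTaylorPoint (hC2 x) θ (ξ θ)
  filter_upwards [(LS_map_add_isLittleO hl hC2 hint hgrad hhess hy hθ').def (sub_pos.2 hc)]
    with ξ hexpansion hξγ
  have hlinear : ∫ θ, ⟪gradS l h N S μ θ, ξ θ⟫ ∂μ = 0 := by
    refine integral_eq_zero_of_ae ?_
    filter_upwards [gradS_ae_eq_zero hgrad hfirst] with θ hθ
    simp [hθ]
  have hquadratic := hsecond ξ (Lp.stronglyMeasurable ξ).measurable (Lp.memLp ξ) hξγ (θ' ξ) (hθ' ξ)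
  rw [← Lp_two_norm_sq_eq_integral] at hquadratic
  rw [hlinear, norm_pow, norm_norm, Real.norm_eq_abs] at hexpansion
  linarith [(abs_le.1 hexpansion).1]

theorem sufficient_local_optimality_general (hl : ContDiff ℝ 2 l)
    (hC2 : ∀ x, ContDiff ℝ 2 (h · x)) (hint : ∀ x, Integrable (h · x) μ)
    (hgrad : ∀ x, MemLp (∇ (h · x)) 2 μ) (hhess : ∀ x, ∃ B, ∀ θ, ‖hess h x θ‖ ≤ B)
    (hy : ∀ j, (S j).2 = 1 ∨ (S j).2 = -1)
    (hfirst : √(∫ θ, ‖gradS l h N S μ θ‖ ^ 2 ∂μ) = 0) {α γ c : ℝ} (hc : c < α / 4)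
    (hsecond : ∀ ξ : EuclideanSpace ℝ (Fin d) → EuclideanSpace ℝ (Fin d),
      Measurable ξ → MemLp ξ 2 μ → (∀ᵐ θ ∂μ, ‖ξ θ‖ ^ 2 ≤ γ) →
      ∀ θ' : EuclideanSpace ℝ (Fin d) → X → EuclideanSpace ℝ (Fin d),
        (∀ θ x, IsTaylorPoint (h · x) θ (ξ θ) (θ' θ x)) →
        (α / 2) * (∫ θ, ‖ξ θ‖ ^ 2 ∂μ) ≤ Hmu l h N S μ ξ θ') :
    ∃ ε : ℝ, 0 < ε ∧ ∀ ξ : EuclideanSpace ℝ (Fin d) → EuclideanSpace ℝ (Fin d),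
      MemLp ξ 2 μ → (∀ᵐ θ ∂μ, ‖ξ θ‖ ^ 2 ≤ γ) → ∫ θ, ‖ξ θ‖ ^ 2 ∂μ ≤ ε ^ 2 →
        LS l h N S μ + c * ∫ θ, ‖ξ θ‖ ^ 2 ∂μ ≤ LS l h N S (μ.map fun θ => θ + ξ θ) := by
  obtain ⟨ε, hε, hball⟩ := Metric.nhds_basis_closedBall.eventually_iff.1
    (eventually_LS_add_const_mul_norm_sq_le hl hC2 hint hgrad hhess hy hfirst hc hsecond)
  refine ⟨ε, hε, fun ξ hξ hξγ hξε => ?_⟩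
  have hcoe : hξ.toLp ξ =ᵐ[μ] ξ := hξ.coeFn_toLp
  have hnorm : ‖hξ.toLp ξ‖ ^ 2 = ∫ θ, ‖ξ θ‖ ^ 2 ∂μ := by
    rw [Lp_two_norm_sq_eq_integral]
    exact integral_congr_ae (hcoe.mono fun θ hθ => by simp only [hθ])
  have hmap : (μ.map fun θ => θ + hξ.toLp ξ θ) = μ.map fun θ => θ + ξ θ :=
    Measure.map_congr (hcoe.mono fun θ hθ => by simp only [hθ])
  rw [← hmap, ← hnorm]
  refine hball ?_ ?_
  · rw [mem_closedBall_zero_iff]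
    exact le_of_sq_le_sq (hnorm.trans_le hξε) hε.le
  · filter_upwards [hcoe, hξγ] with θ hθ hθγ
    rwa [hθ]

end Risk

/-- Sufficient local optimality condition.  Under the smoothness and
boundedness assumption, with `l` convex, if `μ*` satisfies the first-order condition
`‖E_S[s_{μ*}]‖_{L²(μ*)} = 0` and the second-order condition
`H_{μ*}(ξ) ≥ (α/2)‖ξ‖²_{L²(μ*)}` for all `ξ` with `‖ξ‖²_{L^∞(μ*)} ≤ γ`, then `ξ = 0` is
a local minimum of `ξ ↦ L_S((id+ξ)_♯ μ*)` on `L^∞(μ*)`. -/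
theorem sufficient_local_optimality
    {d : ℕ} {X : Type*}
    (l : ℝ → ℝ) (hl : ContDiff ℝ 2 l) (hlconv : ConvexOn ℝ Set.univ l)
    (h : EuclideanSpace ℝ (Fin d) → X → ℝ)
    (hbdd : ∀ θ x, h θ x ∈ Set.Icc (-1 : ℝ) 1)
    (hC2 : ∀ x : X, ContDiff ℝ 2 (fun θ => h θ x))
    (B : ℝ)
    (hB : ∀ (θ : EuclideanSpace ℝ (Fin d)) (x : X),
      ‖gradient (fun θ' => h θ' x) θ‖ ≤ B ∧ ‖hess h x θ‖ ≤ B)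
    (N : ℕ) (hN : 0 < N) (S : Fin N → X × ℝ)
    (hy : ∀ j, (S j).2 = 1 ∨ (S j).2 = -1)
    (μstar : Measure (EuclideanSpace ℝ (Fin d))) [IsProbabilityMeasure μstar]
    (hmom : Integrable (fun θ => ‖θ‖ ^ 2) μstar)
    -- first-order condition (local optimality condition)
    (hfirst : Real.sqrt (∫ θ, ‖gradS l h N S μstar θ‖ ^ 2 ∂μstar) = 0)
    (α γ : ℝ) (hα : 0 < α) (hγ : 0 < γ)
    -- second-order condition: `H_{μ*}(ξ) ≥ (α/2)‖ξ‖²_{L²(μ*)}` whenever `‖ξ‖²_{L^∞} ≤ γ`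
    (hsecond : ∀ ξ : EuclideanSpace ℝ (Fin d) → EuclideanSpace ℝ (Fin d),
      Measurable ξ → (∀ᵐ θ ∂μstar, ‖ξ θ‖ ^ 2 ≤ γ) →
      ∀ θ' : EuclideanSpace ℝ (Fin d) → X → EuclideanSpace ℝ (Fin d),
        (∀ θ x, ∃ t ∈ Set.Icc (0 : ℝ) 1, θ' θ x = θ + t • ξ θ) →
        (α / 2) * (∫ θ, ‖ξ θ‖ ^ 2 ∂μstar) ≤ Hmu l h N S μstar ξ θ') :
    ∃ ε : ℝ, 0 < ε ∧
      ∀ ξ : EuclideanSpace ℝ (Fin d) → EuclideanSpace ℝ (Fin d),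
        Measurable ξ → (∀ᵐ θ ∂μstar, ‖ξ θ‖ ≤ ε) →
        LS l h N S μstar ≤ LS l h N S (μstar.map (fun θ => θ + ξ θ)) := by
  have hgrad (x : X) : MemLp (∇ (h · x)) 2 μstar :=
    .of_bound (contDiff_one_gradient (hC2 x)).continuous.aestronglyMeasurable B
      (.of_forall fun θ => (hB θ x).1)
  have hint (x : X) : Integrable (h · x) μstar :=
    .of_bound (hC2 x).continuous.aestronglyMeasurable 1 (.of_forall fun θ => abs_le.2 (hbdd θ x))
  obtain ⟨ε, hε, hgrowth⟩ := sufficient_local_optimality_general (c := 0) hl hC2 hint hgrad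
    (fun x => ⟨B, fun θ => (hB θ x).2⟩) hy hfirst (by positivity)
    fun ξ hξ _ hξγ θ' hθ' => hsecond ξ hξ hξγ θ' fun θ x => (hθ' θ x).1
  refine ⟨min ε √γ, lt_min hε (Real.sqrt_pos.2 hγ), fun ξ hξ hξr => ?_⟩
  have hξγ : ∀ᵐ θ ∂μstar, ‖ξ θ‖ ^ 2 ≤ γ := hξr.mono fun θ hθ =>
    (Real.le_sqrt (norm_nonneg _) hγ.le).1 (hθ.trans (min_le_right _ _))
  have hξε : ∀ᵐ θ ∂μstar, ‖ξ θ‖ ≤ ε := hξr.mono fun θ hθ => hθ.trans (min_le_left _ _)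
  simpa using hgrowth ξ (.of_bound hξ.aestronglyMeasurable ε hξε) hξγ
    (integral_norm_sq_le_of_ae_norm_le hξε)
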